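/- arXiv:1811.01229 — 6 statements merged into one kernel-verified Lean document; each statement's English description precedes it below -/
import Mathlib

section
/- Let m ≥ 1 and let a_1, …, a_{2m} be positive integers. Then M⁺(a_1, …, a_{2m}) = M(a_1+1, 2^{(a_2−1)}, a_3+2, 2^{(a_4−1)}, …, a_{2m−1}+2, 2^{(a_{2m}−1)}) · R, where R = [[1,1],[0,1]]. -/
/-- `M(c₁, …, c_n) = [[c₁,−1],[1,0]] ⋯ [[c_n,−1],[1,0]]`. -/
def Mneg (cs : List ℤ) : Matrix (Fin 2) (Fin 2) ℤ :=
  (cs.map fun c => !![c, -1; 1, 0]).prod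

/-- `M⁺(a₁, …, a_k) = [[a₁,1],[1,0]] ⋯ [[a_k,1],[1,0]]`. -/
def Mpos (as : List ℤ) : Matrix (Fin 2) (Fin 2) ℤ :=
  (as.map fun a => !![a, 1; 1, 0]).prod

/-- Auxiliary: converts `(a₁, a₂, a₃, …)` to `(a₁+2, 2^(a₂−1), a₃+2, 2^(a₄−1), …)`. -/
def hzTail : List ℤ → List ℤ
  | [] => []
  | [a] => [a + 2]
  | a :: b :: l => (a + 2) :: (List.replicate (b - 1).toNat 2 ++ hzTail l)

/-- The Hirzebruch conversion:
`(a₁, a₂, a₃, a₄, …) ↦ (a₁+1, 2^(a₂−1), a₃+2, 2^(a₄−1), …)`. -/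
def hz : List ℤ → List ℤ
  | [] => []
  | [a] => [a + 1]
  | a :: b :: l => (a + 1) :: (List.replicate (b - 1).toNat 2 ++ hzTail l)

theorem Mneg_two_pow (t : ℕ) :
    (!![2, -1; 1, 0] : Matrix (Fin 2) (Fin 2) ℤ) ^ t = !![(t : ℤ) + 1, -t; t, 1 - t] := by
  induction t with
  | zero => ext i j; fin_cases i <;> fin_cases j <;> simp
  | succ k ih =>
    rw [pow_succ, ih, Matrix.mul_fin_two]
    push_cast
    ext i j
    fin_cases i <;> fin_cases j <;> simp <;> ring

theorem Mpair (a b : ℤ) (hb : 1 ≤ b) :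
    (!![a, 1; 1, 0] * !![b, 1; 1, 0] : Matrix (Fin 2) (Fin 2) ℤ) =
      !![a + 1, -1; 1, 0] * !![2, -1; 1, 0] ^ (b - 1).toNat * !![1, 1; 0, 1] := by
  have h : (((b - 1).toNat : ℕ) : ℤ) = b - 1 := Int.toNat_of_nonneg (by omega)
  rw [Mneg_two_pow, h]
  simp only [Matrix.mul_fin_two]
  ext i j
  fin_cases i <;> fin_cases j <;> simp <;> ring

theorem Mshift (a : ℤ) : (!![a + 2, -1; 1, 0] : Matrix (Fin 2) (Fin 2) ℤ) =
    !![1, 1; 0, 1] * !![a + 1, -1; 1, 0] := by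
  rw [Matrix.mul_fin_two]
  ext i j
  fin_cases i <;> fin_cases j <;> simp <;> ring

theorem Mtail (m : ℕ) : ∀ l : List ℤ, l.length = 2 * m → (∀ x ∈ l, 1 ≤ x) →
    !![1, 1; 0, 1] * Mpos l = Mneg (hzTail l) * !![1, 1; 0, 1] := by
  induction m with
  | zero =>
    intro l hl _
    obtain rfl : l = [] := List.length_eq_zero_iff.mp (by omega)
    simp [Mpos, Mneg, hzTail]
  | succ k ih =>
    intro l hl hx
    match l, hl, hx with
    | [], hl, _ => simp at hl
    | [a], hl, _ => simp at hl; omega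
    | a :: b :: l, hl, hx =>
      have h := ih l (by simp at hl; omega) (fun x h => hx x (by simp [h]))
      have hp := Mpair a b (hx b (by simp))
      simp only [Mpos, Mneg, hzTail, List.map_cons, List.prod_cons, List.map_append,
        List.prod_append, List.map_replicate, List.prod_replicate] at h ⊢
      rw [Mshift, ← mul_assoc !![a, 1; 1, 0], hp]
      simp only [mul_assoc] at h ⊢
      rw [h]

/-- for positive integers `a₁, …, a_{2m}` (`m ≥ 1`),
`M⁺(a₁, …, a_{2m}) = M(a₁+1, 2^(a₂−1), a₃+2, 2^(a₄−1), …, a_{2m−1}+2, 2^(a_{2m}−1)) · R`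
where `R = [[1,1],[0,1]]`. -/
theorem stmt2 (m : ℕ) (hm : 1 ≤ m) (a : List ℤ) (hlen : a.length = 2 * m)
    (ha : ∀ x ∈ a, 1 ≤ x) :
    Mpos a = Mneg (hz a) * !![1, 1; 0, 1] := by
  match a, hlen, ha with
  | [], hl, _ => simp at hl; omega
  | [a], hl, _ => simp at hl; omega
  | a :: b :: l, hl, hx =>
    have h := Mtail (m - 1) l (by simp at hl; omega) (fun x h => hx x (by simp [h]))
    have hp := Mpair a b (hx b (by simp))
    simp only [Mpos, Mneg, hz, List.map_cons, List.prod_cons, List.map_append,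
      List.prod_append, List.map_replicate, List.prod_replicate] at h ⊢
    rw [← mul_assoc !![a, 1; 1, 0], hp]
    simp only [mul_assoc] at h ⊢
    rw [h]
end

section
/- Let m ≥ 1 and let a_1, …, a_{2m} be positive integers. Then M⁺(a_1, …, a_{2m}) = −M(a_1+1, 2^{(a_2−1)}, a_3+2, 2^{(a_4−1)}, …, a_{2m−1}+2, 2^{(a_{2m})}, 1, 1). -/
/-- Auxiliary: converts `(a₁, …, a_{2m})` (treating every odd-position entry
with `+2`) to `(a₁+2, 2^(a₂−1), …, a_{2m−1}+2, 2^(a_{2m}), 1, 1)`. -/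
def hz5Tail : List ℤ → List ℤ
  | [] => [1, 1]
  | [a] => [a + 2, 1, 1]
  | [a, b] => (a + 2) :: (List.replicate b.toNat 2 ++ [1, 1])
  | a :: b :: l => (a + 2) :: (List.replicate (b - 1).toNat 2 ++ hz5Tail l)

/-- The conversion
`(a₁, …, a_{2m}) ↦ (a₁+1, 2^(a₂−1), a₃+2, 2^(a₄−1), …, a_{2m−1}+2, 2^(a_{2m}), 1, 1)`. -/
def hz5 : List ℤ → List ℤ
  | [] => [1, 1]
  | [a] => [a + 1, 1, 1]
  | [a, b] => (a + 1) :: (List.replicate b.toNat 2 ++ [1, 1])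
  | a :: b :: l => (a + 1) :: (List.replicate (b - 1).toNat 2 ++ hz5Tail l)

lemma Mneg_cons (c : ℤ) (l : List ℤ) : Mneg (c :: l) = !![c, -1; 1, 0] * Mneg l := by
  simp [Mneg]

lemma Mpos_cons (c : ℤ) (l : List ℤ) : Mpos (c :: l) = !![c, 1; 1, 0] * Mpos l := by
  simp [Mpos]

lemma Mneg_two (t : ℕ) (l : List ℤ) : Mneg (List.replicate t 2 ++ l) =
    !![(t : ℤ) + 1, -t; t, 1 - t] * Mneg l := by
  induction t with
  | zero => simp [← Matrix.one_fin_two]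
  | succ n ih =>
    rw [List.replicate_succ, List.cons_append, Mneg_cons, ih, ← Matrix.mul_assoc]
    congr 1
    rw [Matrix.mul_fin_two]
    push_cast
    congr! 3 <;> ring_nf

lemma Mneg_one_one : Mneg [1, 1] = !![0, -1; 1, -1] := by
  simp [Mneg]

lemma Mneg_tail_pair (a b : ℤ) (hb : 1 ≤ b) :
    Mneg (hz5Tail [a, b]) = -(!![1, 1; 0, 1] * Mpos [a, b]) := by
  have h : ((b.toNat : ℕ) : ℤ) = b := Int.toNat_of_nonneg (by omega)
  rw [hz5Tail, Mneg_cons, Mneg_two, Mneg_one_one, h]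
  simp only [Mpos, List.map_cons, List.map_nil, List.prod_cons, List.prod_nil, mul_one,
    Matrix.mul_fin_two]
  ext i j
  fin_cases i <;> fin_cases j <;> simp <;> ring

lemma Mneg_tail (n : ℕ) : ∀ a : List ℤ, a.length = 2 * (n + 1) → (∀ x ∈ a, 1 ≤ x) →
    Mneg (hz5Tail a) = -(!![1, 1; 0, 1] * Mpos a) := by
  induction n with
  | zero =>
    intro a hl ha
    match a, hl with
    | [a, b], _ => exact Mneg_tail_pair a b (ha b (by simp))
  | succ n ih =>
    intro a hl ha
    match a, hl with
    | a :: b :: c :: l, hl =>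
      have hb : 1 ≤ b := ha b (by simp)
      have h : (((b - 1).toNat : ℕ) : ℤ) = b - 1 := Int.toNat_of_nonneg (by omega)
      have key := ih (c :: l) (by simp at hl ⊢; omega)
        (fun x hx => ha x (by simp at hx ⊢; tauto))
      rw [hz5Tail, Mneg_cons, Mneg_two, key, h, Mpos_cons a, Mpos_cons b]
      · simp only [Matrix.mul_neg, ← Matrix.mul_assoc]
        congr 2
        simp only [Matrix.mul_fin_two]
        ext i j
        fin_cases i <;> fin_cases j <;> simp <;> ring
      · simp

lemma Mneg_hz5 (a b : ℤ) (l : List ℤ) :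
    Mneg (hz5 (a :: b :: l)) = !![1, -1; 0, 1] * Mneg (hz5Tail (a :: b :: l)) := by
  have h : (!![a + 1, -1; 1, 0] : Matrix (Fin 2) (Fin 2) ℤ) =
      !![1, -1; 0, 1] * !![a + 2, -1; 1, 0] := by
    rw [Matrix.mul_fin_two]
    congr! 3 <;> ring_nf
  cases l <;> simp only [hz5, hz5Tail, Mneg_cons (a + 1), Mneg_cons (a + 2), h, Matrix.mul_assoc]

/-- for positive integers `a₁, …, a_{2m}` (`m ≥ 1`),
`M⁺(a₁, …, a_{2m}) = −M(a₁+1, 2^(a₂−1), a₃+2, 2^(a₄−1), …, a_{2m−1}+2, 2^(a_{2m}), 1, 1)`. -/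
theorem stmt5 (m : ℕ) (hm : 1 ≤ m) (a : List ℤ) (hlen : a.length = 2 * m)
    (ha : ∀ x ∈ a, 1 ≤ x) :
    Mpos a = -Mneg (hz5 a) := by
  match a, hlen with
  | [], h => simp at h; omega
  | [_], h => simp at h; omega
  | x :: y :: l, h =>
    rw [Mneg_hz5, Mneg_tail (m - 1) _ (by omega) ha, Matrix.mul_neg, neg_neg,
      ← Matrix.mul_assoc, Matrix.mul_fin_two]
    simp [← Matrix.one_fin_two]
end

section
/- Let n ≥ 3 and let x : {1, …, n} × {1, …, n} → ℤ satisfy x_{i,i} = 0 for all i, x_{i,i+1} = 1 for 1 ≤ i ≤ n−1, and the Ptolemy–Plücker relations x_{i,j}·x_{k,ℓ} = x_{i,k}·x_{j,ℓ} + x_{i,ℓ}·x_{k,j} for all 1 ≤ i ≤ k ≤ j ≤ ℓ ≤ n. Set c_t = x_{t−1,t+1} for 2 ≤ t ≤ n−1. Then for all 2 ≤ i ≤ j ≤ n−1 one has x_{i−1,j+1} = K_{j−i+1}(c_i, …, c_j). -/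
/-- Continuants of the sequence `c t, c (t+1), …`, with an index shift
absorbing `K₋₁`: `cont c t m = K_{m−1}(c t, …, c (t+m−2))`; so
`cont c t 0 = K₋₁ = 0`, `cont c t 1 = K₀ = 1`, and
`K_i = c_{t+i−1}·K_{i−1} − K_{i−2}`. -/
def cont (c : ℕ → ℤ) (t : ℕ) : ℕ → ℤ
  | 0 => 0
  | 1 => 1
  | m + 2 => c (t + m) * cont c t (m + 1) - cont c t m

/-- Let `n ≥ 3` and let `x : {1,…,n}² → ℤ` satisfy `x_{i,i} = 0`,
`x_{i,i+1} = 1` for `1 ≤ i ≤ n−1`, and the Ptolemy–Plücker relations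
`x_{i,j}·x_{k,ℓ} = x_{i,k}·x_{j,ℓ} + x_{i,ℓ}·x_{k,j}` for
`1 ≤ i ≤ k ≤ j ≤ ℓ ≤ n`. Setting `c_t = x_{t−1,t+1}`, for all
`2 ≤ i ≤ j ≤ n−1` one has `x_{i−1,j+1} = K_{j−i+1}(c_i, …, c_j)`
(which is `cont c i (j−i+2)`). -/
theorem stmt14 (n : ℕ) (hn : 3 ≤ n) (x : ℕ → ℕ → ℤ)
    (hdiag : ∀ i, 1 ≤ i → i ≤ n → x i i = 0)
    (hadj : ∀ i, 1 ≤ i → i + 1 ≤ n → x i (i + 1) = 1)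
    (hPP : ∀ i k j l, 1 ≤ i → i ≤ k → k ≤ j → j ≤ l → l ≤ n →
      x i j * x k l = x i k * x j l + x i l * x k j) :
    ∀ i j, 2 ≤ i → i ≤ j → j + 1 ≤ n →
      x (i - 1) (j + 1) = cont (fun t => x (t - 1) (t + 1)) i (j - i + 2) := by
  have key : ∀ a, 1 ≤ a → ∀ m, (a + m ≤ n →
      x a (a + m) = cont (fun t => x (t - 1) (t + 1)) (a + 1) m) ∧ (a + (m + 1) ≤ n →
      x a (a + (m + 1)) = cont (fun t => x (t - 1) (t + 1)) (a + 1) (m + 1)) := by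
    intro a ha m
    induction m with
    | zero =>
      exact ⟨fun h => by simpa [cont] using hdiag a ha h,
        fun h => by simpa [cont] using hadj a ha h⟩
    | succ m ih =>
      refine ⟨ih.2, fun h => ?_⟩
      have h1 := ih.1 (by omega)
      have h2 := ih.2 (by omega)
      have h3 := hPP a (a + m) (a + m + 1) (a + m + 1 + 1) ha (by omega) (by omega)
        (by omega) (by omega)
      rw [hadj (a + m) (by omega) (by omega), hadj (a + m + 1) (by omega) (by omega)] at h3
      have e : a + 1 + m = a + m + 1 := by omega
      have e2 : a + (m + 1 + 1) = a + m + 1 + 1 := by omega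
      simp only [cont]
      rw [← h1, ← h2, e, e2, Nat.add_sub_cancel, ← Nat.add_assoc a m 1]
      linarith
  intro i j hi hij hj
  have h := (key (i - 1) (by omega) (j - i + 2)).1 (by omega)
  rw [show i - 1 + (j - i + 2) = j + 1 by omega, show i - 1 + 1 = i by omega] at h
  exact h
end

section
/- Let n ≥ 3 and let c_1, …, c_n be positive integers. The following system has a unique solution x : {1, …, n} × {1, …, n} → ℤ if and only if M(c_1, …, c_n) = −Id: (a) symmetry x_{i,j} = x_{j,i}; (b) x_{i,i} = 0 for all i; (c) x_{i,i+1} = 1 for 1 ≤ i ≤ n−1 and x_{1,n} = 1 (cyclic convention); (d) x_{i−1,i+1} = c_i for all i, indices taken modulo n (i.e. x_{i−1,i+1} = c_i for 2 ≤ i ≤ n−1, x_{n,2} = c_1, x_{n−1,1} = c_n); (e) the Ptolemy–Plücker relations x_{i,j}·x_{k,ℓ} = x_{i,k}·x_{j,ℓ} + x_{i,ℓ}·x_{k,j} for all 1 ≤ i ≤ k ≤ j ≤ ℓ ≤ n. -/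
/-- The symmetric Ptolemy–Plücker system on `{1,…,n}²` with prescribed
quiddity `c` (1-indexed):
(a) symmetry; (b) `x_{i,i} = 0`; (c) `x_{i,i+1} = 1` for `1 ≤ i ≤ n−1` and
`x_{1,n} = 1`; (d) `x_{i−1,i+1} = c_i` for `2 ≤ i ≤ n−1`, `x_{n,2} = c₁`,
`x_{n−1,1} = c_n`; (e) the Ptolemy–Plücker relations. -/
def SymSys (n : ℕ) (c : ℕ → ℤ) (x : ℕ → ℕ → ℤ) : Prop :=
  (∀ i j, 1 ≤ i → i ≤ n → 1 ≤ j → j ≤ n → x i j = x j i) ∧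
  (∀ i, 1 ≤ i → i ≤ n → x i i = 0) ∧
  (∀ i, 1 ≤ i → i + 1 ≤ n → x i (i + 1) = 1) ∧
  x 1 n = 1 ∧
  (∀ i, 2 ≤ i → i + 1 ≤ n → x (i - 1) (i + 1) = c i) ∧
  x n 2 = c 1 ∧
  x (n - 1) 1 = c n ∧
  (∀ i k j l, 1 ≤ i → i ≤ k → k ≤ j → j ≤ l → l ≤ n →
    x i j * x k l = x i k * x j l + x i l * x k j)

/-- Solution of the recurrence `s (k+2) = c (k+1) * s (k+1) - s k`. -/
def recSeq (c : ℕ → ℤ) (u v : ℤ) : ℕ → ℤ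
  | 0 => u
  | 1 => v
  | k + 2 => c (k + 1) * recSeq c u v (k + 1) - recSeq c u v k

theorem Mneg_eq (c : ℕ → ℤ) (n : ℕ) :
    Mneg ((List.range n).map fun i => c (i + 1)) =
      !![recSeq c 0 1 (n + 1), -recSeq c 0 1 n; recSeq c (-1) 0 (n + 1), -recSeq c (-1) 0 n] := by
  induction n with
  | zero =>
    simp [Mneg, recSeq, Matrix.one_fin_two]
  | succ n ih =>
    unfold Mneg at ih ⊢
    rw [List.range_succ, List.map_append, List.map_append, List.prod_append, ih]
    simp only [recSeq, List.map_cons, List.map_nil, List.prod_cons, List.prod_nil, mul_one]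
    ext i j
    fin_cases i <;> fin_cases j <;> simp [Matrix.mul_apply, Fin.sum_univ_two] <;> ring

/-- The determinant of the `i`-th and `j`-th vectors. -/
def wdet (c : ℕ → ℤ) (i j : ℕ) : ℤ :=
  recSeq c 0 1 i * recSeq c (-1) 0 j - recSeq c 0 1 j * recSeq c (-1) 0 i

theorem wdet_self (c : ℕ → ℤ) (i : ℕ) : wdet c i i = 0 := by
  unfold wdet; ring

theorem wdet_step (c : ℕ → ℤ) (i j : ℕ) :
    wdet c i (j + 2) = c (j + 1) * wdet c i (j + 1) - wdet c i j := by
  simp only [wdet, recSeq]; ring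

theorem wdet_succ (c : ℕ → ℤ) (i : ℕ) : wdet c i (i + 1) = 1 := by
  induction i with
  | zero => simp [wdet, recSeq]
  | succ i ih =>
    rw [← ih]
    simp only [wdet, recSeq]; ring

theorem sol_eq (n : ℕ) (c : ℕ → ℤ) (x : ℕ → ℕ → ℤ) (h : SymSys n c x) (i : ℕ) (hi : 1 ≤ i)
    (d : ℕ) : (i + d ≤ n → x i (i + d) = wdet c i (i + d)) ∧
      (i + d + 1 ≤ n → x i (i + d + 1) = wdet c i (i + d + 1)) := by
  obtain ⟨h1, h2, h3, h4, h5, h6, h7, h8⟩ := h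
  induction d with
  | zero =>
    refine ⟨fun hh => ?_, fun hh => ?_⟩
    · simpa [wdet_self] using h2 i hi hh
    · simpa [wdet_succ] using h3 i hi hh
  | succ d ih =>
    refine ⟨ih.2, fun hh => ?_⟩
    have e1 := ih.1 (by omega)
    have e2 := ih.2 (by omega)
    have key := h8 i (i + d) (i + d + 1) (i + d + 2) hi (by omega) (by omega) (by omega) (by omega)
    have k1 := h5 (i + d + 1) (by omega) (by omega)
    have k2 := h3 (i + d) (by omega) (by omega)
    have k3 := h3 (i + d + 1) (by omega) (by omega)
    simp only [Nat.add_sub_cancel] at k1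
    have k3' : x (i + d + 1) (i + d + 2) = 1 := k3
    have k1' : x (i + d) (i + d + 2) = c (i + d + 1) := k1
    rw [k1', k2, k3', e1, e2] at key
    have := wdet_step c i (i + d)
    change x i (i + d + 2) = wdet c i (i + d + 2)
    rw [this]; linarith

theorem sol_eq' (n : ℕ) (c : ℕ → ℤ) (x : ℕ → ℕ → ℤ) (h : SymSys n c x) (i j : ℕ) (hi : 1 ≤ i)
    (hij : i ≤ j) (hj : j ≤ n) : x i j = wdet c i j := by
  obtain ⟨d, rfl⟩ := Nat.exists_eq_add_of_le hij
  exact (sol_eq n c x h i hi d).1 hj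

theorem stmt15 (n : ℕ) (hn : 3 ≤ n) (c : ℕ → ℤ)
    (hc : ∀ i, 1 ≤ i → i ≤ n → 1 ≤ c i) :
    ((∃ x : ℕ → ℕ → ℤ, SymSys n c x) ∧
      (∀ x y : ℕ → ℕ → ℤ, SymSys n c x → SymSys n c y →
        ∀ i j, 1 ≤ i → i ≤ n → 1 ≤ j → j ≤ n → x i j = y i j))
    ↔ Mneg ((List.range n).map fun i => c (i + 1)) = -1 := by
  rw [Mneg_eq]
  obtain ⟨m, rfl⟩ : ∃ m, n = m + 1 := ⟨n - 1, by omega⟩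
  have ha : recSeq c 0 1 (m + 1 + 1) = c (m + 1) * recSeq c 0 1 (m + 1) - recSeq c 0 1 m := rfl
  have hb : recSeq c (-1) 0 (m + 1 + 1) =
    c (m + 1) * recSeq c (-1) 0 (m + 1) - recSeq c (-1) 0 m := rfl
  have a1 : recSeq c 0 1 1 = 1 := rfl
  have b1 : recSeq c (-1) 0 1 = 0 := rfl
  have a2 : recSeq c 0 1 2 = c 1 := by simp [recSeq]
  have b2 : recSeq c (-1) 0 2 = 1 := by simp [recSeq]
  constructor
  · rintro ⟨⟨x, hx⟩, -⟩
    have e1 := sol_eq' _ c x hx 1 (m + 1) le_rfl (by omega) le_rfl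
    have e2 := sol_eq' _ c x hx 1 m le_rfl (by omega) (by omega)
    have e3 := sol_eq' _ c x hx 2 (m + 1) (by omega) (by omega) le_rfl
    have e4 := wdet_succ c m
    obtain ⟨h1, h2, h3, h4, h5, h6, h7, h8⟩ := hx
    rw [h4] at e1
    rw [h1 1 m (by omega) (by omega) (by omega) (by omega)] at e2
    rw [Nat.add_sub_cancel] at h7
    rw [h7] at e2
    rw [h1 2 (m + 1) (by omega) (by omega) (by omega) (by omega), h6] at e3
    simp only [wdet, a1, b1, a2, b2] at e1 e2 e3 e4
    have B : recSeq c (-1) 0 (m + 1) = 1 := by linarith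
    have B' : recSeq c (-1) 0 m = c (m + 1) := by linarith
    rw [B] at e3 e4
    have A : recSeq c 0 1 (m + 1) = 0 := by linarith
    rw [A] at e4
    have A' : recSeq c 0 1 m = 1 := by linarith
    rw [ha, hb, A, A', B, B']
    ext i j
    fin_cases i <;> fin_cases j <;> simp
  · intro h
    have m00 := congrFun (congrFun h 0) 0
    have m01 := congrFun (congrFun h 0) 1
    have m10 := congrFun (congrFun h 1) 0
    have m11 := congrFun (congrFun h 1) 1
    simp at m00 m01 m10 m11
    rw [ha, m01] at m00
    rw [hb, m11] at m10
    have A' : recSeq c 0 1 m = 1 := by linarith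
    have B' : recSeq c (-1) 0 m = c (m + 1) := by linarith
    refine ⟨⟨fun i j => if i ≤ j then wdet c i j else wdet c j i, ?_⟩, ?_⟩
    · refine ⟨?_, ?_, ?_, ?_, ?_, ?_, ?_, ?_⟩
      · intro i j _ _ _ _
        rcases lt_trichotomy i j with h | h | h
        · simp [h.le, h.not_ge]
        · simp [h]
        · simp [h.le, h.not_ge]
      · intro i _ _
        simp [wdet_self]
      · intro i _ _
        simp [wdet_succ]
      · simp [wdet, a1, b1, m11]
      · intro i hi _
        obtain ⟨k, rfl⟩ : ∃ k, i = k + 1 := ⟨i - 1, by omega⟩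
        have := wdet_step c k k
        rw [wdet_self, wdet_succ] at this
        have hle : k ≤ k + 1 + 1 := by omega
        simp only [Nat.add_sub_cancel, hle, if_true]
        rw [this]; ring
      · have : ¬ (m + 1 ≤ 2) := by omega
        simp only [this, if_false, wdet, a2, b2, m11, m01]; ring
      · have : ¬ (m ≤ 1) := by omega
        simp only [Nat.add_sub_cancel, this, if_false, wdet, a1, b1, A', B']; ring
      · intro i k j l _ hik hkj hjl _
        simp only [hik, hkj, hjl, hik.trans hkj, hkj.trans hjl, (hik.trans hkj).trans hjl, if_true,
          wdet]
        ring
    · intro x y hx hy i j hi hi' hj hj'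
      rcases le_total i j with h | h
      · rw [sol_eq' _ c x hx i j hi h hj', sol_eq' _ c y hy i j hi h hj']
      · rw [hx.1 i j hi hi' hj hj', hy.1 i j hi hi' hj hj',
          sol_eq' _ c x hx j i hj h hi', sol_eq' _ c y hy j i hj h hi']
end

section
/- Let n ≥ 3 and let c_1, …, c_n be positive integers. The following system has a unique solution x : {1, …, n} × {1, …, n} → ℤ if and only if M(c_1, …, c_n) = Id: (a) skew-symmetry x_{i,j} = −x_{j,i}; (b) x_{i,i} = 0 for all i; (c) x_{i,i+1} = 1 for 1 ≤ i ≤ n−1 and x_{n,1} = 1 (cyclic convention); (d) x_{i−1,i+1} = c_i for all i, indices taken modulo n (i.e. x_{i−1,i+1} = c_i for 2 ≤ i ≤ n−1, x_{n,2} = c_1, x_{n−1,1} = c_n); (e) the Ptolemy–Plücker relations x_{i,j}·x_{k,ℓ} = x_{i,k}·x_{j,ℓ} + x_{i,ℓ}·x_{k,j} for all 1 ≤ i ≤ k ≤ j ≤ ℓ ≤ n. -/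
/-- The skew-symmetric Ptolemy–Plücker system on `{1,…,n}²` with prescribed
quiddity `c` (1-indexed):
(a) skew-symmetry; (b) `x_{i,i} = 0`; (c) `x_{i,i+1} = 1` for `1 ≤ i ≤ n−1`
and `x_{n,1} = 1`; (d) `x_{i−1,i+1} = c_i` for `2 ≤ i ≤ n−1`, `x_{n,2} = c₁`,
`x_{n−1,1} = c_n`; (e) the Ptolemy–Plücker relations. -/
def SkewSys (n : ℕ) (c : ℕ → ℤ) (x : ℕ → ℕ → ℤ) : Prop :=
  (∀ i j, 1 ≤ i → i ≤ n → 1 ≤ j → j ≤ n → x i j = -x j i) ∧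
  (∀ i, 1 ≤ i → i ≤ n → x i i = 0) ∧
  (∀ i, 1 ≤ i → i + 1 ≤ n → x i (i + 1) = 1) ∧
  x n 1 = 1 ∧
  (∀ i, 2 ≤ i → i + 1 ≤ n → x (i - 1) (i + 1) = c i) ∧
  x n 2 = c 1 ∧
  x (n - 1) 1 = c n ∧
  (∀ i k j l, 1 ≤ i → i ≤ k → k ≤ j → j ≤ l → l ≤ n →
    x i j * x k l = x i k * x j l + x i l * x k j)

/-- The sequence with `s 0 = a`, `s 1 = b`, `s (k+2) = c (k+1) * s (k+1) - s k`. -/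
def seqq (c : ℕ → ℤ) (a b : ℤ) : ℕ → ℤ
  | 0 => a
  | 1 => b
  | (k + 2) => c (k + 1) * seqq c a b (k + 1) - seqq c a b k

/-- The 2×2 minors of the two fundamental sequences. -/
def minorD (c : ℕ → ℤ) (i j : ℕ) : ℤ :=
  seqq c 0 1 i * seqq c (-1) 0 j - seqq c (-1) 0 i * seqq c 0 1 j

theorem seqq_rec (c : ℕ → ℤ) (a b : ℤ) (k : ℕ) :
    seqq c a b (k + 2) = c (k + 1) * seqq c a b (k + 1) - seqq c a b k := rfl

theorem minorD_rec (c : ℕ → ℤ) (i k : ℕ) :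
    minorD c i (k + 2) = c (k + 1) * minorD c i (k + 1) - minorD c i k := by
  simp only [minorD, seqq_rec]; ring

theorem minorD_self (c : ℕ → ℤ) (i : ℕ) : minorD c i i = 0 := by
  simp only [minorD]; ring

theorem minorD_succ (c : ℕ → ℤ) (i : ℕ) : minorD c i (i + 1) = 1 := by
  induction i with
  | zero => simp [minorD, seqq]
  | succ k ih =>
    rw [← ih]; simp only [minorD, seqq_rec]; ring

theorem Mneg_range (c : ℕ → ℤ) (k : ℕ) :
    Mneg ((List.range k).map fun i => c (i + 1)) =
      !![seqq c 0 1 (k + 1), -seqq c 0 1 k; seqq c (-1) 0 (k + 1), -seqq c (-1) 0 k] := by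
  induction k with
  | zero => ext i j; fin_cases i <;> fin_cases j <;> simp [Mneg, seqq]
  | succ k ih =>
    have : Mneg ((List.range (k + 1)).map fun i => c (i + 1)) =
        Mneg ((List.range k).map fun i => c (i + 1)) * !![c (k + 1), -1; 1, 0] := by
      simp [Mneg, List.range_succ]
    rw [this, ih, Matrix.mul_fin_two]
    simp only [seqq_rec]
    ext i j; fin_cases i <;> fin_cases j <;> simp <;> ring

theorem SkewSys_row {n : ℕ} {c : ℕ → ℤ} {x : ℕ → ℕ → ℤ} (h : SkewSys n c x) (i : ℕ)
    (hi : 1 ≤ i) (k : ℕ) : i + k ≤ n → x i (i + k) = minorD c i (i + k) := by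
  obtain ⟨-, h0, h1, -, hd, -, -, he⟩ := h
  induction k using Nat.twoStepInduction with
  | zero => intro hk; simpa [minorD_self] using h0 i hi hk
  | one => intro hk; rw [minorD_succ]; exact h1 i hi hk
  | more k ih1 ih2 =>
    intro hk
    have e := he i (i + k) (i + k + 1) (i + k + 2) hi (by omega) (by omega) (by omega) hk
    have a1 := h1 (i + k) (by omega) (by omega)
    have a2 : x (i + k + 1) (i + k + 2) = 1 := h1 (i + k + 1) (by omega) (by omega)
    have a3 : x (i + k) (i + k + 2) = c (i + k + 1) := hd (i + k + 1) (by omega) (by omega)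
    have b1 := ih1 (by omega)
    have b2 : x i (i + k + 1) = minorD c i (i + k + 1) := ih2 (by omega)
    have r := minorD_rec c i (i + k)
    change x i (i + k + 2) = minorD c i (i + k + 2)
    rw [a1, a2, a3] at e
    rw [r, ← b1, ← b2]
    linarith

theorem SkewSys_eq {n : ℕ} {c : ℕ → ℤ} {x : ℕ → ℕ → ℤ} (h : SkewSys n c x) (i j : ℕ)
    (hi : 1 ≤ i) (hi' : i ≤ n) (hj : 1 ≤ j) (hj' : j ≤ n) : x i j = minorD c i j := by
  rcases le_total i j with hij | hij
  · obtain ⟨k, rfl⟩ := Nat.exists_eq_add_of_le hij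
    exact SkewSys_row h i hi k hj'
  · obtain ⟨k, rfl⟩ := Nat.exists_eq_add_of_le hij
    rw [h.1 _ _ hi hi' hj hj', SkewSys_row h j hj k hi']
    simp only [minorD]; ring

/-- for `n ≥ 3` and positive integers `c₁, …, c_n`, the
skew-symmetric Ptolemy–Plücker system has a unique solution
`x : {1,…,n}² → ℤ` if and only if `M(c₁, …, c_n) = Id`. -/
theorem stmt16 (n : ℕ) (hn : 3 ≤ n) (c : ℕ → ℤ)
    (hc : ∀ i, 1 ≤ i → i ≤ n → 1 ≤ c i) :
    ((∃ x : ℕ → ℕ → ℤ, SkewSys n c x) ∧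
      (∀ x y : ℕ → ℕ → ℤ, SkewSys n c x → SkewSys n c y →
        ∀ i j, 1 ≤ i → i ≤ n → 1 ≤ j → j ≤ n → x i j = y i j))
    ↔ Mneg ((List.range n).map fun i => c (i + 1)) = 1 := by
  have U1 : seqq c 0 1 1 = 1 := rfl
  have W1 : seqq c (-1) 0 1 = 0 := rfl
  have U2 : seqq c 0 1 2 = c 1 := by simp [seqq]
  have W2 : seqq c (-1) 0 2 = 1 := by simp [seqq]
  obtain ⟨m, rfl⟩ : ∃ m, n = m + 1 := ⟨n - 1, by omega⟩
  have recW := seqq_rec c (-1) 0 m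
  rw [Mneg_range]
  constructor
  · rintro ⟨⟨x, hx⟩, -⟩
    have key := SkewSys_eq hx
    obtain ⟨-, -, -, h1, -, h2, h3, -⟩ := hx
    rw [key _ _ (by omega) (by omega) (by omega) (by omega)] at h1 h2 h3
    have hs := minorD_succ c (m + 1)
    simp only [minorD, U1, W1, U2, W2, Nat.add_sub_cancel] at h1 h2 h3 hs
    have Wn : seqq c (-1) 0 (m + 1) = -1 := by linarith
    have Un : seqq c 0 1 (m + 1) = 0 := by rw [Wn] at h2; linarith
    have Wn1 : seqq c (-1) 0 (m + 1 + 1) = 0 := by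
      change seqq c (-1) 0 (m + 2) = 0
      rw [recW, Wn]; linarith
    have Un1 : seqq c 0 1 (m + 1 + 1) = 1 := by rw [Wn, Wn1] at hs; linarith
    rw [Wn, Un, Wn1, Un1, Matrix.one_fin_two]; simp
  · intro hM
    have Un1 := congrFun (congrFun hM 0) 0
    have Un := congrFun (congrFun hM 0) 1
    have Wn1 := congrFun (congrFun hM 1) 0
    have Wn := congrFun (congrFun hM 1) 1
    simp at Un1 Un Wn1 Wn
    have Wn' : seqq c (-1) 0 (m + 1) = -1 := by linarith
    refine ⟨⟨minorD c, ?_, fun i _ _ => minorD_self c i, fun i _ _ => minorD_succ c i,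
      ?_, ?_, ?_, ?_, ?_⟩, ?_⟩
    · intro i j _ _ _ _; simp only [minorD]; ring
    · simp only [minorD, U1, W1, Wn']; ring
    · intro i hi _
      obtain ⟨k, rfl⟩ : ∃ k, i = k + 1 := ⟨i - 1, by omega⟩
      rw [Nat.add_sub_cancel, minorD_rec, minorD_succ, minorD_self]; ring
    · simp only [minorD, U2, W2, Wn', Un]; ring
    · simp only [minorD, U1, W1, Nat.add_sub_cancel]
      change seqq c (-1) 0 (m + 2) = 0 at Wn1
      rw [recW, Wn'] at Wn1; linarith
    · intro i k j l _ _ _ _ _; simp only [minorD]; ring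
    · intro x y hx hy i j a b d e
      rw [SkewSys_eq hx i j a b d e, SkewSys_eq hy i j a b d e]
end

section
/- Every A ∈ SL(2,ℤ) can be written in the form A = ε·M(c_1, …, c_k) for some sign ε ∈ {1, −1} and positive integers c_1, …, c_k. Moreover, if k is the smallest integer for which such a presentation of A exists, then the tuple (c_1, …, c_k) is unique: whenever ε·M(c_1, …, c_k) = ε'·M(c'_1, …, c'_k) = A with ε, ε' ∈ {1, −1}, all c_i ≥ 1 and all c'_i ≥ 1, one has c_i = c'_i for all i. -/
namespace MnegAux

abbrev Mat := Matrix (Fin 2) (Fin 2) ℤ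

lemma nil : Mneg [] = 1 := by simp [Mneg]
lemma cons (x : ℤ) (t : List ℤ) : Mneg (x :: t) = !![x, -1; 1, 0] * Mneg t := by simp [Mneg]
lemma app (s t : List ℤ) : Mneg (s ++ t) = Mneg s * Mneg t := by simp [Mneg]

/-- the three invariants: entries of `A Q Aᵀ`, with `Q` the form fixed by `M(1)`. -/
def q1 (A : Mat) : ℤ := 2 * A 0 0 * A 0 0 + 2 * A 0 0 * A 0 1 + 2 * A 0 1 * A 0 1
def q2 (A : Mat) : ℤ := 2 * A 1 0 * A 1 0 + 2 * A 1 0 * A 1 1 + 2 * A 1 1 * A 1 1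
def ff (A : Mat) : ℤ :=
  2 * A 0 0 * A 1 0 + A 0 0 * A 1 1 + A 0 1 * A 1 0 + 2 * A 0 1 * A 1 1

lemma q1_cons (x : ℤ) (t : List ℤ) : q1 (Mneg (x :: t)) =
    x ^ 2 * q1 (Mneg t) - 2 * x * ff (Mneg t) + q2 (Mneg t) := by
  rw [cons]; simp [q1, q2, ff, Matrix.mul_apply, Fin.sum_univ_two]; ring
lemma q2_cons (x : ℤ) (t : List ℤ) : q2 (Mneg (x :: t)) = q1 (Mneg t) := by
  rw [cons]; simp [q1, q2, Matrix.mul_apply, Fin.sum_univ_two]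
lemma ff_cons (x : ℤ) (t : List ℤ) : ff (Mneg (x :: t)) =
    x * q1 (Mneg t) - ff (Mneg t) := by
  rw [cons]; simp [q1, ff, Matrix.mul_apply, Fin.sum_univ_two]; ring
lemma q1_nil : q1 (Mneg []) = 2 := by simp [nil, q1]
lemma q2_nil : q2 (Mneg []) = 2 := by simp [nil, q2]
lemma ff_nil : ff (Mneg []) = 1 := by simp [nil, ff]

lemma disc (c : List ℤ) : q1 (Mneg c) * q2 (Mneg c) = ff (Mneg c) ^ 2 + 3 := by
  induction c with
  | nil => rw [q1_nil, q2_nil, ff_nil]; norm_num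
  | cons x t ih => rw [q1_cons, q2_cons, ff_cons]; linear_combination ih

/-- equal invariants -/
def Same (c c' : List ℤ) : Prop := q1 (Mneg c) = q1 (Mneg c') ∧ q2 (Mneg c) = q2 (Mneg c') ∧
  ff (Mneg c) = ff (Mneg c')

def Ones (c : List ℤ) : Prop := c = [] ∨ c = [1] ∨ c = [1, 1]

inductive Core : List ℤ → Prop
  | base (b : ℤ) (t : List ℤ) (hb : 2 ≤ b) (ht : Ones t) : Core (b :: t)
  | step (b : ℤ) (t : List ℤ) (hb : 2 ≤ b) (ht : Core t) : Core (b :: t)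

lemma ones_inv {c : List ℤ} (h : Ones c) :
    q1 (Mneg c) = 2 ∧ q2 (Mneg c) = 2 ∧ ff (Mneg c) = 1 := by
  rcases h with rfl | rfl | rfl <;> simp [q1_cons, q2_cons, ff_cons, q1_nil, q2_nil, ff_nil]

lemma core_inv {c : List ℤ} (h : Core c) :
    0 < q2 (Mneg c) ∧ q2 (Mneg c) < ff (Mneg c) ∧ ff (Mneg c) < q1 (Mneg c) := by
  induction h with
  | base b t hb ht =>
    obtain ⟨h1, h2, h3⟩ := ones_inv ht
    rw [q1_cons, q2_cons, ff_cons, h1, h2, h3]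
    refine ⟨by norm_num, by linarith, by nlinarith⟩
  | step b t hb ht ih =>
    obtain ⟨h1, h2, h3⟩ := ih
    have hd := disc (b :: t)
    have e1 : 0 < q2 (Mneg (b :: t)) := by rw [q2_cons]; linarith
    have e2 : q2 (Mneg (b :: t)) < ff (Mneg (b :: t)) := by
      rw [q2_cons, ff_cons]; nlinarith
    refine ⟨e1, e2, ?_⟩
    by_contra hc
    nlinarith

lemma core_tail {b : ℤ} {t : List ℤ} (h : Core (b :: t)) :
    2 ≤ b ∧ (Ones t ∨ Core t) := by
  cases h <;> tauto

lemma core_ne {c : List ℤ} (h : Core c) : ∃ b t, c = b :: t := by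
  cases h <;> exact ⟨_, _, rfl⟩

def Red (c : List ℤ) : Prop := Ones c ∨ Core c ∨ (∃ k, Core k ∧ c = 1 :: k) ∨
  (∃ k, Core k ∧ c = 1 :: 1 :: k)

lemma same_tail {x : ℤ} {t t' : List ℤ} (h : Same (x :: t) (x :: t')) : Same t t' := by
  obtain ⟨h1, h2, h3⟩ := h
  simp only [q1_cons, q2_cons, ff_cons] at h1 h2 h3
  rw [h2] at h1 h3
  have h4 : ff (Mneg t) = ff (Mneg t') := by linarith
  rw [h4] at h1
  exact ⟨h2, by linarith, h4⟩

lemma tail_bd {t : List ℤ} (h : Ones t ∨ Core t) :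
    0 < ff (Mneg t) ∧ ff (Mneg t) < q1 (Mneg t) := by
  rcases h with h | h
  · have := ones_inv h; omega
  · have := core_inv h; omega

lemma ones_eq {c c' : List ℤ} (h : Ones c) (h' : Ones c') (hl : c.length = c'.length) :
    c = c' := by
  rcases h with rfl | rfl | rfl <;> rcases h' with rfl | rfl | rfl <;> simp_all

lemma core_uniq {c : List ℤ} : ∀ {c' : List ℤ}, Core c → Core c' → c.length = c'.length →
    Same c c' → c = c' := by
  induction c with
  | nil => intro c' h; obtain ⟨_, _, h⟩ := core_ne h; cases h
  | cons b t ih =>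
    intro c' h h' hl hs
    obtain ⟨b', t', rfl⟩ := core_ne h'
    obtain ⟨hb, ht⟩ := core_tail h
    obtain ⟨hb', ht'⟩ := core_tail h'
    have e : b = b' := by
      have h1 := tail_bd ht
      have h2 := tail_bd ht'
      obtain ⟨-, h3, h4⟩ := hs
      simp only [q2_cons, ff_cons] at h3 h4
      rw [h3] at h4 h1
      rcases lt_trichotomy b b' with h | h | h
      · nlinarith
      · exact h
      · nlinarith
    subst e
    have hs' := same_tail hs
    simp only [List.length_cons, add_left_inj] at hl
    congr 1
    rcases ht with ht | ht <;> rcases ht' with ht' | ht'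
    · exact ones_eq ht ht' hl
    · have := ones_inv ht; have := core_inv ht'; obtain ⟨_, _, _⟩ := hs'; omega
    · have := ones_inv ht'; have := core_inv ht; obtain ⟨_, _, _⟩ := hs'; omega
    · exact ih ht ht' hl hs'

lemma c_inv {k : List ℤ} (h : Core k) :
    0 < q1 (Mneg (1 :: k)) ∧ 0 < ff (Mneg (1 :: k)) ∧ q1 (Mneg (1 :: k)) < ff (Mneg (1 :: k)) ∧
    ff (Mneg (1 :: k)) < q2 (Mneg (1 :: k)) := by
  have := core_inv h
  have hp : 0 < q1 (Mneg (1 :: k)) := by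
    have hd := disc (1 :: k)
    have h2 : 0 < q2 (Mneg (1 :: k)) := by rw [q2_cons]; omega
    by_contra hc
    nlinarith [sq_nonneg (ff (Mneg (1 :: k)))]
  refine ⟨hp, ?_⟩
  simp only [q1_cons, q2_cons, ff_cons]
  omega

lemma d_inv {k : List ℤ} (h : Core k) : ff (Mneg (1 :: 1 :: k)) < 0 := by
  have := c_inv h
  rw [ff_cons]; omega

lemma red_uniq {c c' : List ℤ} (h : Red c) (h' : Red c') (hl : c.length = c'.length)
    (hs : Same c c') : c = c' := by
  have hs0 := hs
  obtain ⟨s1, s2, s3⟩ := hs0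
  rcases h with h | h | ⟨k, h, rfl⟩ | ⟨k, h, rfl⟩ <;>
  rcases h' with h' | h' | ⟨k', h', rfl⟩ | ⟨k', h', rfl⟩
  · exact ones_eq h h' hl
  · have := ones_inv h; have := core_inv h'; omega
  · have := ones_inv h; have := c_inv h'; omega
  · have := ones_inv h; have := d_inv h'; omega
  · have := core_inv h; have := ones_inv h'; omega
  · exact core_uniq h h' hl hs
  · have := core_inv h; have := c_inv h'; omega
  · have := core_inv h; have := d_inv h'; omega
  · have := c_inv h; have := ones_inv h'; omega
  · have := c_inv h; have := core_inv h'; omega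
  · rw [core_uniq h h' (by simpa using hl) (same_tail hs)]
  · have := c_inv h; have := d_inv h'; omega
  · have := d_inv h; have := ones_inv h'; omega
  · have := d_inv h; have := core_inv h'; omega
  · have := d_inv h; have := c_inv h'; omega
  · rw [core_uniq h h' (by simpa using hl) (same_tail (same_tail hs))]

def MinWord (c : List ℤ) : Prop := (∀ x ∈ c, 1 ≤ x) ∧
  ∀ (δ : ℤ) (d : List ℤ), (δ = 1 ∨ δ = -1) → (∀ x ∈ d, 1 ≤ x) →
    Mneg c = δ • Mneg d → c.length ≤ d.length

lemma MinWord.tail {x : ℤ} {t : List ℤ} (h : MinWord (x :: t)) : MinWord t := by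
  obtain ⟨h1, h2⟩ := h
  refine ⟨fun y hy => h1 y (by simp [hy]), fun δ d hδ hd he => ?_⟩
  have := h2 δ (x :: d) hδ (by
    intro y hy
    rcases List.mem_cons.1 hy with rfl | hy
    · exact h1 _ (by simp)
    · exact hd y hy) (by rw [cons, cons, he, Matrix.mul_smul])
  simpa using this

lemma rel1 (t : List ℤ) : Mneg (1 :: 1 :: 1 :: t) = (-1 : ℤ) • Mneg t := by
  simp only [cons, ← mul_assoc]
  ext i j; fin_cases i <;> fin_cases j <;> simp [Matrix.mul_apply, Fin.sum_univ_two]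

lemma rel2 (x b : ℤ) (t : List ℤ) :
    Mneg (x :: 1 :: b :: t) = (1 : ℤ) • Mneg ((x - 1) :: (b - 1) :: t) := by
  simp only [cons, ← mul_assoc]
  ext i j; fin_cases i <;> fin_cases j <;> simp [Matrix.mul_apply, Matrix.vecMul, dotProduct, Fin.sum_univ_two] <;>
    first | ring1 | (left; ring1)

lemma rel3 (x b : ℤ) (t : List ℤ) :
    Mneg (x :: 1 :: 1 :: b :: t) = (-1 : ℤ) • Mneg ((x + b - 1) :: t) := by
  simp only [cons, ← mul_assoc]
  ext i j; fin_cases i <;> fin_cases j <;> simp [Matrix.mul_apply, Matrix.vecMul, dotProduct, Fin.sum_univ_two] <;>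
    first | ring1 | (left; ring1)

lemma min_red {c : List ℤ} : MinWord c → Red c := by
  induction c with
  | nil => intro _; exact Or.inl (Or.inl rfl)
  | cons x t ih =>
    intro h
    obtain ⟨hp, hm⟩ := h
    have hx : x = 1 ∨ 2 ≤ x := by have := hp x (by simp); omega
    rcases ih (MinWord.tail ⟨hp, hm⟩) with ht | ht | ⟨k, hk, rfl⟩ | ⟨k, hk, rfl⟩
    · rcases hx with rfl | hx
      · rcases ht with rfl | rfl | rfl
        · exact Or.inl (Or.inr (Or.inl rfl))
        · exact Or.inl (Or.inr (Or.inr rfl))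
        · have := hm (-1) [] (by simp) (by simp) (rel1 [])
          simp at this
      · exact Or.inr (Or.inl (Core.base _ _ hx ht))
    · rcases hx with rfl | hx
      · exact Or.inr (Or.inr (Or.inl ⟨t, ht, rfl⟩))
      · exact Or.inr (Or.inl (Core.step _ _ hx ht))
    · rcases hx with rfl | hx
      · exact Or.inr (Or.inr (Or.inr ⟨k, hk, rfl⟩))
      · obtain ⟨b, t, rfl⟩ := core_ne hk
        have hb := (core_tail hk).1
        have := hm 1 ((x - 1) :: (b - 1) :: t) (by simp) (by
          intro y hy
          simp only [List.mem_cons] at hy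
          rcases hy with rfl | rfl | hy
          · omega
          · omega
          · exact hp y (by simp [hy])) (rel2 _ _ _)
        simp at this
    · obtain ⟨b, t, rfl⟩ := core_ne hk
      have hb := (core_tail hk).1
      have := hm (-1) ((x + b - 1) :: t) (by simp) (by
          intro y hy
          simp only [List.mem_cons] at hy
          rcases hy with rfl | hy
          · omega
          · exact hp y (by simp [hy])) (rel3 _ _ _)
      simp at this
      omega

lemma same_of {c c' : List ℤ} {ε : ℤ} (hε : ε = 1 ∨ ε = -1) (h : Mneg c = ε • Mneg c') :
    Same c c' := by
  unfold Same
  rw [h]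
  rcases hε with rfl | rfl <;> simp [q1, q2, ff]

/-- representable -/
def Rep (A : Mat) : Prop := ∃ (ε : ℤ) (c : List ℤ), (ε = 1 ∨ ε = -1) ∧ (∀ x ∈ c, 1 ≤ x) ∧
        A = ε • Mneg c

lemma Rep.mul {A B : Mat} (hA : Rep A) (hB : Rep B) : Rep (A * B) := by
  obtain ⟨ε, c, hε, hc, rfl⟩ := hA
  obtain ⟨δ, d, hδ, hd, rfl⟩ := hB
  refine ⟨ε * δ, c ++ d, ?_, ?_, ?_⟩
  · rcases hε with rfl | rfl <;> rcases hδ with rfl | rfl <;> simp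
  · intro x hx
    rcases List.mem_append.1 hx with h | h
    · exact hc x h
    · exact hd x h
  · rw [app, Matrix.smul_mul, Matrix.mul_smul, smul_smul]

open Matrix in
lemma rep_all (g : SpecialLinearGroup (Fin 2) ℤ) :
    Rep (g : Mat) ∧ Rep ((g⁻¹ : SpecialLinearGroup (Fin 2) ℤ) : Mat) := by
  have hg : g ∈ Subgroup.closure ({ModularGroup.S, ModularGroup.T} :
      Set (SpecialLinearGroup (Fin 2) ℤ)) := by
    rw [SpecialLinearGroup.SL2Z_generators]; trivial
  induction hg using Subgroup.closure_induction with
  | mem x hx =>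
    rcases hx with rfl | rfl
    · refine ⟨⟨-1, [1, 1, 2, 1, 1], by simp, by simp, ?_⟩, ⟨1, [1, 1, 2, 1, 1], by simp, by simp, ?_⟩⟩ <;>
      decide
    · refine ⟨⟨-1, [2, 1, 1], by simp, by simp, ?_⟩, ⟨-1, [1, 1, 2, 1], by simp, by simp, ?_⟩⟩ <;>
      decide
  | one =>
    have : Rep 1 := ⟨1, [], by simp, by simp, by simp [nil]⟩
    simpa using this
  | mul x y _ _ hx hy =>
    rw [_root_.mul_inv_rev]
    exact ⟨hx.1.mul hy.1, hy.2.mul hx.2⟩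
  | inv x _ hx => rw [inv_inv]; exact hx.symm

end MnegAux

/-- every `A ∈ SL(2,ℤ)` can be written as
`A = ε·M(c₁, …, c_k)` with `ε = ±1` and positive integers `c_i`; moreover the
tuple `(c₁, …, c_k)` of a presentation of minimal length `k` is unique. -/
theorem stmt18 :
    (∀ A : Matrix (Fin 2) (Fin 2) ℤ, A.det = 1 →
      ∃ (ε : ℤ) (c : List ℤ), (ε = 1 ∨ ε = -1) ∧ (∀ x ∈ c, 1 ≤ x) ∧
        A = ε • Mneg c) ∧
    (∀ A : Matrix (Fin 2) (Fin 2) ℤ, A.det = 1 →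
      ∀ (ε ε' : ℤ) (c c' : List ℤ),
        (ε = 1 ∨ ε = -1) → (ε' = 1 ∨ ε' = -1) →
        (∀ x ∈ c, 1 ≤ x) → (∀ x ∈ c', 1 ≤ x) →
        A = ε • Mneg c → A = ε' • Mneg c' →
        c.length = c'.length →
        (∀ (δ : ℤ) (d : List ℤ), (δ = 1 ∨ δ = -1) → (∀ x ∈ d, 1 ≤ x) →
          A = δ • Mneg d → c.length ≤ d.length) →
        c = c') := by
  open MnegAux in
  refine ⟨fun A hA => (rep_all ⟨A, hA⟩).1, ?_⟩
  intro A _ ε ε' c c' hε hε' hc hc' h h' hl hm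
  have key : ∀ {e : ℤ} {l : List ℤ}, (e = 1 ∨ e = -1) → A = e • Mneg l → Mneg l = e • A := by
    intro e l he h
    rcases he with rfl | rfl <;> simp [h]
  have min : ∀ {e : ℤ} {l : List ℤ}, (e = 1 ∨ e = -1) → (∀ x ∈ l, 1 ≤ x) → A = e • Mneg l →
      l.length = c.length → MinWord l := by
    intro e l he hp h hll
    refine ⟨hp, fun δ d hδ hd hh => ?_⟩
    rw [hll]
    refine hm (e * δ) d ?_ hd (by rw [h, hh, smul_smul])
    rcases he with rfl | rfl <;> rcases hδ with rfl | rfl <;> simp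
  refine red_uniq (min_red (min hε hc h rfl)) (min_red (min hε' hc' h' hl.symm)) hl
    (same_of (ε := ε * ε') ?_ ?_)
  · rcases hε with rfl | rfl <;> rcases hε' with rfl | rfl <;> simp
  · rw [key hε h, h', smul_smul]
end
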